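/- arXiv:2405.09878 — 3 statements merged into one kernel-verified Lean document; each statement's English description precedes it below -/
import Mathlib

section
/- Let n ≥ 1, d ≥ 1 and k_1,…,k_n ≥ 1. Any two hyperplane arrangements in Λ_d((k_1,…,k_n)) have the same number of regions. -/
noncomputable section

/-- `S` is (the carrier of) an affine subspace of dimension `m` in `ℝ^d`. -/
def IsAffineOfDim (d m : ℕ) (S : Set (EuclideanSpace ℝ (Fin d))) : Prop :=
  ∃ A : AffineSubspace ℝ (EuclideanSpace ℝ (Fin d)),
    (A : Set (EuclideanSpace ℝ (Fin d))) = S ∧ S.Nonempty ∧ Module.finrank ℝ A.direction = m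

/-- A family of hyperplanes `H i ⊆ ℝ^d`, grouped by `g : ι → Fin n` into `n` groups of
prescribed sizes `k l`, is in *general position modulo parallel hyperplanes*:
within each group the hyperplanes are parallel and pairwise distinct, and any selection of
hyperplanes from pairwise distinct groups is in general position. -/
def IsGPPH {ι : Type} [Fintype ι] (d n : ℕ) (g : ι → Fin n) (k : Fin n → ℕ)
    (H : ι → Set (EuclideanSpace ℝ (Fin d))) : Prop :=
  (∀ l : Fin n, (Finset.univ.filter fun i => g i = l).card = k l) ∧
  (∀ l : Fin n, ∃ w : EuclideanSpace ℝ (Fin d), w ≠ 0 ∧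
    ∀ i, g i = l → ∃ c : ℝ, H i = {x | (∑ t, w t * x t) = c}) ∧
  (∀ i i' : ι, i ≠ i' → g i = g i' → H i ≠ H i') ∧
  (∀ S : Finset ι, Set.InjOn g S →
    (S.card ≤ d → IsAffineOfDim d (d - S.card) (⋂ i ∈ S, H i)) ∧
    (d < S.card → (⋂ i ∈ S, H i) = ∅))

/-- The regions of an arrangement whose union is `A`: the connected components of `Aᶜ`. -/
def regionsOf {d : ℕ} (A : Set (EuclideanSpace ℝ (Fin d))) :
    Set (Set (EuclideanSpace ℝ (Fin d))) :=
  {C | ∃ x ∈ Aᶜ, C = connectedComponentIn Aᶜ x}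

/-- The number of regions of an arrangement whose union is `A`. -/
def numRegions {d : ℕ} (A : Set (EuclideanSpace ℝ (Fin d))) : ℕ :=
  (regionsOf A).ncard

/-!
Sign vectors of affine functionals satisfy deletion–restriction: adding a hyperplane `H` to an
arrangement cuts in two exactly the cells that `H` meets, and these correspond to the cells of the
arrangement induced on `H`. If no nonempty intersection of hyperplanes lies in a further
hyperplane, iterating this shows that the number of regions is the number of subfamilies with
nonempty intersection. For an arrangement in general position modulo parallels these are the
choices of one hyperplane from each of at most `d` groups, so there are `∑ ∏_{l ∈ U} k l` of them,
the sum running over the sets `U` of at most `d` groups.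
-/

open scoped Finset

section SignVectors

variable {ι V P : Type*} [AddCommGroup V] [Module ℝ V] [AddTorsor V P]
variable (f : ι → P →ᵃ[ℝ] ℝ)

/-- The sign vector of a point with respect to the functionals `f i`, `i ∈ T`, extended by `0` to
the indices outside `T` so that all `T` share the same type of sign vectors. -/
def signVector (T : Finset ι) (x : P) : ι → SignType :=
  (T : Set ι).indicator fun i => SignType.sign (f i x)

/-- The sign vectors realised on `s` by points off the hyperplanes `f i = 0`, `i ∈ T`. For `s` an
affine subspace they label the regions of the arrangement induced on `s`. -/
def signVectors (T : Finset ι) (s : Set P) : Set (ι → SignType) :=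
  signVector f T '' {x ∈ s | ∀ i ∈ T, f i x ≠ 0}

variable {f}

lemma signVector_eq_signVector_iff {T : Finset ι} {x y : P} :
    signVector f T x = signVector f T y ↔
      ∀ i ∈ T, SignType.sign (f i x) = SignType.sign (f i y) := by
  refine ⟨fun h i hi => ?_, fun h => Set.indicator_congr h⟩
  simpa [signVector, hi] using congrFun h i

lemma signVector_of_notMem {T : Finset ι} {i : ι} (hi : i ∉ T) (x : P) : signVector f T x i = 0 :=
  Set.indicator_of_notMem (by simpa using hi) _

lemma signVector_mem_signVectors {T : Finset ι} {s : Set P} {x y : P} (hx : ∀ i ∈ T, f i x ≠ 0)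
    (hys : y ∈ s) (hxy : ∀ i ∈ T, SignType.sign (f i y) = SignType.sign (f i x)) :
    signVector f T x ∈ signVectors f T s := by
  refine ⟨y, ⟨hys, fun i hi => ?_⟩, signVector_eq_signVector_iff.2 hxy⟩
  rw [← sign_ne_zero, hxy i hi, sign_ne_zero]
  exact hx i hi

lemma signVectors_mono {T : Finset ι} {s t : Set P} (h : s ⊆ t) :
    signVectors f T s ⊆ signVectors f T t :=
  Set.image_mono fun _ hx => ⟨h hx.1, hx.2⟩

lemma ncard_signVectors_empty (s : Set P) [Decidable s.Nonempty] :
    (signVectors f ∅ s).ncard = if s.Nonempty then 1 else 0 := by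
  have himage : signVectors f ∅ s = (fun _ => 0) '' s := by
    have hzero : signVector f ∅ = fun _ => 0 := by
      ext x i
      simp [signVector]
    simp [signVectors, hzero]
  split_ifs with hs
  · rw [himage, hs.image_const, Set.ncard_singleton]
  · rw [himage, Set.not_nonempty_iff_eq_empty.1 hs, Set.image_empty, Set.ncard_empty]

section Insert

variable [DecidableEq ι]

lemma signVector_insert (i : ι) (T : Finset ι) (x : P) :
    signVector f (insert i T) x =
      Function.update (signVector f T x) i (SignType.sign (f i x)) := by
  ext j
  by_cases hj : j = i
  · subst hj
    simp [signVector]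
  · simp [signVector, Set.indicator_apply, hj]

lemma signVectors_insert (i : ι) (T : Finset ι) (s : Set P) :
    signVectors f (insert i T) s =
      (Function.update · i 1) '' signVectors f T {x ∈ s | 0 < f i x} ∪
        (Function.update · i (-1)) '' signVectors f T {x ∈ s | f i x < 0} := by
  simp only [signVectors, Set.image_image]
  ext σ
  constructor
  · rintro ⟨x, ⟨hxs, hx⟩, rfl⟩
    rw [Finset.forall_mem_insert] at hx
    rcases hx.1.lt_or_gt with hneg | hpos
    · exact Or.inr ⟨x, ⟨⟨hxs, hneg⟩, hx.2⟩, by rw [signVector_insert, sign_neg hneg]⟩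
    · exact Or.inl ⟨x, ⟨⟨hxs, hpos⟩, hx.2⟩, by rw [signVector_insert, sign_pos hpos]⟩
  · rintro (⟨x, ⟨⟨hxs, hxi⟩, hx⟩, rfl⟩ | ⟨x, ⟨⟨hxs, hxi⟩, hx⟩, rfl⟩)
    · exact ⟨x, ⟨hxs, Finset.forall_mem_insert _ _ _ |>.2 ⟨hxi.ne', hx⟩⟩,
        by rw [signVector_insert, sign_pos hxi]⟩
    · exact ⟨x, ⟨hxs, Finset.forall_mem_insert _ _ _ |>.2 ⟨hxi.ne, hx⟩⟩,
        by rw [signVector_insert, sign_neg hxi]⟩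

lemma injOn_update_signVectors {i : ι} {T : Finset ι} (hi : i ∉ T) (s : Set P) (a : SignType) :
    Set.InjOn (Function.update · i a) (signVectors f T s) := by
  rintro _ ⟨x, -, rfl⟩ _ ⟨y, -, rfl⟩ hxy
  have hzero := congrArg (Function.update · i (0 : SignType)) hxy
  simp only [Function.update_idem] at hzero
  rwa [Function.update_eq_self_iff.2 (signVector_of_notMem hi x).symm,
    Function.update_eq_self_iff.2 (signVector_of_notMem hi y).symm] at hzero

lemma ncard_signVectors_insert_eq_pos_add_neg [Finite ι] {i : ι} {T : Finset ι} (hi : i ∉ T)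
    (s : Set P) :
    (signVectors f (insert i T) s).ncard =
      (signVectors f T {x ∈ s | 0 < f i x}).ncard +
        (signVectors f T {x ∈ s | f i x < 0}).ncard := by
  have hdisj : Disjoint
      ((Function.update · i (1 : SignType)) '' signVectors f T {x ∈ s | 0 < f i x})
      ((Function.update · i (-1 : SignType)) '' signVectors f T {x ∈ s | f i x < 0}) := by
    rw [Set.disjoint_left]
    rintro _ ⟨σ, -, rfl⟩ ⟨τ, -, hτ⟩
    simpa using congrFun hτ i
  rw [signVectors_insert, Set.ncard_union_eq hdisj,
    (injOn_update_signVectors hi _ _).ncard_image, (injOn_update_signVectors hi _ _).ncard_image]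

end Insert

lemma convex_setOf_sign_eq (a : SignType) : Convex ℝ {r : ℝ | SignType.sign r = a} :=
  (Set.ordConnected_singleton.preimage_mono SignType.sign.monotone).convex

lemma eventually_sign_lineMap_eq {T : Finset ι} {x : P} (hx : ∀ j ∈ T, f j x ≠ 0) (p : P) :
    ∀ᶠ t in nhds (0 : ℝ),
      ∀ j ∈ T, SignType.sign (f j (AffineMap.lineMap x p t)) = SignType.sign (f j x) := by
  rw [Filter.eventually_all_finset]
  intro j hj
  have hcont : ContinuousAt (fun t : ℝ => AffineMap.lineMap (f j x) (f j p) t) 0 := by fun_prop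
  have hsign : ContinuousAt
      (fun t : ℝ => SignType.sign (AffineMap.lineMap (f j x) (f j p) t)) 0 :=
    ContinuousAt.comp (continuousAt_sign_of_ne_zero (by simpa using hx j hj)) hcont
  have hlim := hsign.tendsto
  rw [nhds_discrete SignType, Filter.tendsto_pure] at hlim
  simpa [AffineMap.apply_lineMap] using hlim

lemma exists_mem_pos_of_eq_zero {T : Finset ι} {A : AffineSubspace ℝ P} {x p : P} (hxA : x ∈ A)
    (hpA : p ∈ A) (hx : ∀ j ∈ T, f j x ≠ 0) {h : P →ᵃ[ℝ] ℝ} (hhx : h x = 0) (hhp : h p ≠ 0) :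
    ∃ y ∈ A, 0 < h y ∧ ∀ j ∈ T, SignType.sign (f j y) = SignType.sign (f j x) := by
  have hzero : Filter.Tendsto (fun ε : ℝ => ε * h p) (nhdsWithin 0 (Set.Ioi 0)) (nhds 0) :=
    ((continuous_mul_const (h p)).tendsto' 0 0 (zero_mul _)).mono_left nhdsWithin_le_nhds
  obtain ⟨ε, hε, hεpos⟩ :=
    ((hzero.eventually (eventually_sign_lineMap_eq hx p)).and self_mem_nhdsWithin).exists
  refine ⟨AffineMap.lineMap x p (ε * h p), AffineMap.lineMap_mem _ hxA hpA, ?_, hε⟩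
  have hvalue : h (AffineMap.lineMap x p (ε * h p)) = ε * (h p * h p) := by
    rw [AffineMap.apply_lineMap, AffineMap.lineMap_apply_module', hhx]
    simp [mul_assoc]
  rw [hvalue]
  exact mul_pos hεpos (mul_self_pos.2 hhp)

lemma exists_mem_neg_of_eq_zero {T : Finset ι} {A : AffineSubspace ℝ P} {x p : P} (hxA : x ∈ A)
    (hpA : p ∈ A) (hx : ∀ j ∈ T, f j x ≠ 0) {h : P →ᵃ[ℝ] ℝ} (hhx : h x = 0) (hhp : h p ≠ 0) :
    ∃ y ∈ A, h y < 0 ∧ ∀ j ∈ T, SignType.sign (f j y) = SignType.sign (f j x) := by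
  simpa using
    exists_mem_pos_of_eq_zero (h := -h) hxA hpA hx (by simpa using hhx) (by simpa using hhp)

lemma exists_mem_eq_zero_of_pos_of_neg {T : Finset ι} {A : AffineSubspace ℝ P} {x y : P}
    (hxA : x ∈ A) (hyA : y ∈ A)
    (hxy : ∀ j ∈ T, SignType.sign (f j x) = SignType.sign (f j y))
    {h : P →ᵃ[ℝ] ℝ} (hhx : 0 < h x) (hhy : h y < 0) :
    ∃ z ∈ A, h z = 0 ∧ ∀ j ∈ T, SignType.sign (f j z) = SignType.sign (f j x) := by
  have hzero : (0 : ℝ) ∈ segment ℝ (h x) (h y) := by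
    rw [segment_symm, segment_eq_Icc (hhy.trans hhx).le]
    exact ⟨hhy.le, hhx.le⟩
  rw [segment_eq_image_lineMap] at hzero
  obtain ⟨t, ht, ht0⟩ := hzero
  refine ⟨AffineMap.lineMap x y t, AffineMap.lineMap_mem _ hxA hyA, ?_, fun j hj => ?_⟩
  · rw [AffineMap.apply_lineMap, ht0]
  · rw [AffineMap.apply_lineMap]
    exact (convex_setOf_sign_eq _).lineMap_mem rfl (hxy j hj).symm ht

lemma signVectors_eq_union_pos_neg {A : AffineSubspace ℝ P} {i : ι} {p : P} (hpA : p ∈ A)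
    (hp : f i p ≠ 0) (T : Finset ι) :
    signVectors f T A =
      signVectors f T {x ∈ (A : Set P) | 0 < f i x} ∪
        signVectors f T {x ∈ (A : Set P) | f i x < 0} := by
  apply subset_antisymm
  · rintro _ ⟨x, ⟨hxA, hx⟩, rfl⟩
    rcases lt_trichotomy (f i x) 0 with hneg | hzero | hpos
    · exact Or.inr ⟨x, ⟨⟨hxA, hneg⟩, hx⟩, rfl⟩
    · obtain ⟨y, hyA, hy, hyx⟩ := exists_mem_pos_of_eq_zero hxA hpA hx hzero hp
      exact Or.inl (signVector_mem_signVectors hx ⟨hyA, hy⟩ hyx)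
    · exact Or.inl ⟨x, ⟨⟨hxA, hpos⟩, hx⟩, rfl⟩
  · exact Set.union_subset (signVectors_mono (Set.sep_subset _ _))
      (signVectors_mono (Set.sep_subset _ _))

lemma signVectors_sep_eq_zero {A : AffineSubspace ℝ P} {i : ι} {p : P} (hpA : p ∈ A)
    (hp : f i p ≠ 0) (T : Finset ι) :
    signVectors f T {x ∈ (A : Set P) | f i x = 0} =
      signVectors f T {x ∈ (A : Set P) | 0 < f i x} ∩
        signVectors f T {x ∈ (A : Set P) | f i x < 0} := by
  apply subset_antisymm
  · rintro _ ⟨x, ⟨⟨hxA, hxi⟩, hx⟩, rfl⟩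
    obtain ⟨y, hyA, hy, hyx⟩ := exists_mem_pos_of_eq_zero hxA hpA hx hxi hp
    obtain ⟨z, hzA, hz, hzx⟩ := exists_mem_neg_of_eq_zero hxA hpA hx hxi hp
    exact ⟨signVector_mem_signVectors hx ⟨hyA, hy⟩ hyx,
      signVector_mem_signVectors hx ⟨hzA, hz⟩ hzx⟩
  · rintro _ ⟨⟨x, ⟨⟨hxA, hxi⟩, hx⟩, rfl⟩, ⟨y, ⟨⟨hyA, hyi⟩, -⟩, hyx⟩⟩
    obtain ⟨z, hzA, hz, hzx⟩ := exists_mem_eq_zero_of_pos_of_neg hxA hyA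
      (signVector_eq_signVector_iff.1 hyx.symm) hxi hyi
    exact signVector_mem_signVectors hx ⟨hzA, hz⟩ hzx

lemma ncard_signVectors_insert_eq_deletion_add_restriction [DecidableEq ι] [Finite ι]
    {A : AffineSubspace ℝ P} {i : ι} {T : Finset ι} (hi : i ∉ T)
    (hA : (A : Set P).Nonempty → ∃ p ∈ A, f i p ≠ 0) :
    (signVectors f (insert i T) A).ncard =
      (signVectors f T A).ncard + (signVectors f T {x ∈ (A : Set P) | f i x = 0}).ncard := by
  rcases (A : Set P).eq_empty_or_nonempty with hempty | hne
  · simp [hempty, signVectors]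
  · obtain ⟨p, hpA, hp⟩ := hA hne
    rw [ncard_signVectors_insert_eq_pos_add_neg hi, signVectors_eq_union_pos_neg hpA hp,
      signVectors_sep_eq_zero hpA hp, Set.ncard_union_add_ncard_inter]

end SignVectors

section Flats

variable {ι V P : Type*} [AddCommGroup V] [Module ℝ V] [AddTorsor V P]

/-- The flat of the arrangement `f i = 0` cut out by the hyperplanes with index in `S`, bundled as
an affine subspace; it may be empty. -/
def flat (f : ι → P →ᵃ[ℝ] ℝ) (S : Finset ι) : AffineSubspace ℝ P where
  carrier := {x | ∀ i ∈ S, f i x = 0}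
  smul_vsub_vadd_mem' t x y z hx hy hz i hi := by
    simp [AffineMap.map_vadd, AffineMap.linearMap_vsub, hx i hi, hy i hi, hz i hi]

/-- The arrangement `f i = 0` meets transversally: no nonempty intersection of its hyperplanes is
contained in a further one. This is what deletion–restriction needs on every flat. -/
def IsTransverse (f : ι → P →ᵃ[ℝ] ℝ) : Prop :=
  ∀ S : Finset ι, ∀ i ∉ S, (flat f S : Set P).Nonempty → ∃ p ∈ flat f S, f i p ≠ 0

variable {f : ι → P →ᵃ[ℝ] ℝ}

lemma mem_flat {S : Finset ι} {x : P} : x ∈ flat f S ↔ ∀ i ∈ S, f i x = 0 := Iff.rfl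

lemma coe_flat_insert [DecidableEq ι] (i : ι) (S : Finset ι) :
    (flat f (insert i S) : Set P) = {x ∈ (flat f S : Set P) | f i x = 0} := by
  ext x
  simp [mem_flat, and_comm]

open Classical in
lemma IsTransverse.ncard_signVectors_flat [Finite ι] (hf : IsTransverse f)
    {S T : Finset ι} (hST : Disjoint S T) :
    (signVectors f T (flat f S)).ncard =
      #{U ∈ T.powerset | (flat f (S ∪ U) : Set P).Nonempty} := by
  rw [Finset.card_filter]
  induction T using Finset.induction_on generalizing S with
  | empty =>
    rw [ncard_signVectors_empty, Finset.powerset_empty, Finset.sum_singleton, Finset.union_empty]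
  | insert i T hiT ih =>
    rw [Finset.disjoint_insert_right] at hST
    have hST' : Disjoint (insert i S) T := Finset.disjoint_insert_left.2 ⟨hiT, hST.2⟩
    rw [ncard_signVectors_insert_eq_deletion_add_restriction hiT (hf S i hST.1),
      ← coe_flat_insert, ih hST.2, ih hST', Finset.sum_powerset_insert hiT]
    simp only [Finset.insert_union, Finset.union_insert]

lemma IsTransverse.ncard_signVectors_univ [Fintype ι] (hf : IsTransverse f) :
    (signVectors f Finset.univ Set.univ).ncard =
      {S : Finset ι | (flat f S : Set P).Nonempty}.ncard := by
  classical
  have hflat : (flat f ∅ : Set P) = Set.univ := by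
    ext x
    simp [mem_flat]
  rw [← hflat, hf.ncard_signVectors_flat (Finset.disjoint_empty_left _),
    Set.ncard_eq_toFinset_card']
  simp

end Flats

section Regions

variable {ι E : Type*} [AddCommGroup E] [Module ℝ E]

/-- The cell of the arrangement `f i = 0` with sign vector `σ`. When `σ` has no zero entry, it is
either empty or a region. -/
def cell (f : ι → E →ᵃ[ℝ] ℝ) (σ : ι → SignType) : Set E := {x | ∀ i, SignType.sign (f i x) = σ i}

lemma convex_cell (f : ι → E →ᵃ[ℝ] ℝ) (σ : ι → SignType) : Convex ℝ (cell f σ) := by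
  rw [cell, Set.ofPred_forall]
  exact convex_iInter fun i => (convex_setOf_sign_eq (σ i)).affine_preimage (f i)

lemma connectedComponentIn_eq_cell [TopologicalSpace E] [IsTopologicalAddGroup E]
    [ContinuousSMul ℝ E] {f : ι → E →ᵃ[ℝ] ℝ} (hf : ∀ i, Continuous (f i)) {x : E}
    (hx : ∀ i, f i x ≠ 0) :
    connectedComponentIn {y | ∀ i, f i y ≠ 0} x = cell f fun i => SignType.sign (f i x) := by
  apply subset_antisymm
  · intro y hy i
    have hcont : ContinuousOn (fun z => SignType.sign (f i z))
        (connectedComponentIn {y | ∀ i, f i y ≠ 0} x) := fun z hz =>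
      (ContinuousAt.comp (continuousAt_sign_of_ne_zero (connectedComponentIn_subset _ _ hz i))
        (hf i).continuousAt).continuousWithinAt
    exact isPreconnected_connectedComponentIn.constant hcont hy (mem_connectedComponentIn hx)
  · refine (convex_cell f _).isPreconnected.subset_connectedComponentIn (fun _ => rfl) ?_
    intro y hy i
    rw [← sign_ne_zero, hy i, sign_ne_zero]
    exact hx i

lemma numRegions_eq_ncard_signVectors [Fintype ι] {d : ℕ}
    (f : ι → EuclideanSpace ℝ (Fin d) →ᵃ[ℝ] ℝ) :
    numRegions (⋃ i, {x | f i x = 0}) = (signVectors f Finset.univ Set.univ).ncard := by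
  have hcompl : (⋃ i, {x | f i x = 0})ᶜ = {x | ∀ i, f i x ≠ 0} := by
    ext x
    simp
  have hregions : regionsOf (⋃ i, {x | f i x = 0}) =
      cell f '' signVectors f Finset.univ Set.univ := by
    ext C
    simp only [regionsOf, hcompl, signVectors, signVector, Set.mem_ofPred_eq, Set.mem_image,
      Finset.mem_univ, Set.mem_univ, true_and, forall_const, exists_exists_and_eq_and,
      Finset.coe_univ, Set.indicator_univ]
    refine exists_congr fun x => and_congr_right fun hx => ?_
    rw [connectedComponentIn_eq_cell (fun i => (f i).continuous_of_finiteDimensional) hx, eq_comm]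
  have hinj : Set.InjOn (cell f) (signVectors f Finset.univ Set.univ) := by
    rintro _ ⟨x, -, rfl⟩ τ - hτ
    have hx : x ∈ cell f (signVector f Finset.univ x) := fun i => by simp [signVector]
    ext1 i
    rw [← hx i, (hτ ▸ hx : x ∈ cell f τ) i]
  rw [numRegions, hregions, hinj.ncard_image]

end Regions

section Transversals

variable {ι κ : Type*} [Fintype ι] [DecidableEq κ]

open Classical in
lemma card_injOn_image_eq (g : ι → κ) (U : Finset κ) :
    #{S : Finset ι | Set.InjOn g S ∧ S.image g = U} =
      ∏ l ∈ U, #{i | g i = l} := by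
  rw [← Finset.card_pi]
  symm
  have hg : ∀ p ∈ U.pi fun l => Finset.univ.filter fun i => g i = l, ∀ l hl, g (p l hl) = l := by
    simp
  refine Finset.card_bij (fun p _ => U.attach.image fun l : U => p l l.2) ?_ ?_ ?_
  · intro p hp
    simp only [Finset.mem_filter, Finset.mem_univ, true_and, Finset.image_image]
    constructor
    · intro i hi j hj hij
      obtain ⟨l, -, rfl⟩ := Finset.mem_image.1 hi
      obtain ⟨m, -, rfl⟩ := Finset.mem_image.1 hj
      rw [hg p hp, hg p hp] at hij
      rw [Subtype.ext hij]
    · have hcomp : (g ∘ fun l : U => p l l.2) = Subtype.val := funext fun l => hg p hp l l.2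
      rw [hcomp, Finset.attach_image_val]
  · intro p hp q hq hpq
    ext l hl
    have hmem : p l hl ∈ U.attach.image fun m : U => q m m.2 :=
      hpq ▸ Finset.mem_image_of_mem (fun m : U => p m m.2) (Finset.mem_attach U ⟨l, hl⟩)
    obtain ⟨⟨m, hm⟩, -, hqm⟩ := Finset.mem_image.1 hmem
    obtain rfl : m = l := by rw [← hg q hq m hm, hqm, hg p hp]
    exact hqm.symm
  · intro S hS
    obtain ⟨hinj, rfl⟩ := (Finset.mem_filter.1 hS).2
    choose p hpS hp using fun l (hl : l ∈ S.image g) => Finset.mem_image.1 hl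
    refine ⟨p, by simpa using hp, ?_⟩
    ext i
    simp only [Finset.mem_image, Finset.mem_attach, true_and, Subtype.exists]
    constructor
    · rintro ⟨l, hl, rfl⟩
      exact hpS l (Finset.mem_image.2 hl)
    · intro hi
      have hl := Finset.mem_image_of_mem g hi
      exact ⟨g i, Finset.mem_image.1 hl, hinj (hpS _ hl) hi (hp _ hl)⟩

lemma ncard_injOn_card_le [Fintype κ] (g : ι → κ) (d : ℕ) :
    {S : Finset ι | Set.InjOn g S ∧ S.card ≤ d}.ncard =
      ∑ U : Finset κ with U.card ≤ d, ∏ l ∈ U, #{i | g i = l} := by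
  classical
  rw [Set.ncard_eq_toFinset_card', Set.toFinset_ofPred,
    Finset.card_eq_sum_card_fiberwise (f := Finset.image g)
      (t := Finset.univ.filter fun U => U.card ≤ d)]
  · refine Finset.sum_congr rfl fun U hU => ?_
    rw [← card_injOn_image_eq, Finset.filter_filter]
    congr 1
    ext S
    simp only [Finset.mem_filter, Finset.mem_univ, true_and] at hU ⊢
    constructor
    · rintro ⟨⟨hinj, -⟩, hSU⟩
      exact ⟨hinj, hSU⟩
    · rintro ⟨hinj, rfl⟩
      exact ⟨⟨hinj, (Finset.card_image_of_injOn hinj).symm.trans_le hU⟩, rfl⟩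
  · intro S hS
    simp only [Finset.coe_filter, Finset.mem_univ, true_and, Set.mem_ofPred_eq] at hS ⊢
    exact Finset.card_image_le.trans hS.2

end Transversals

namespace IsGPPH

variable {ι : Type} [Fintype ι] {d n : ℕ} {g : ι → Fin n} {k : Fin n → ℕ}
  {H : ι → Set (EuclideanSpace ℝ (Fin d))}

lemma exists_affineMap (hH : IsGPPH d n g k H) :
    ∃ f : ι → EuclideanSpace ℝ (Fin d) →ᵃ[ℝ] ℝ, H = fun i => {x | f i x = 0} := by
  obtain ⟨-, hparallel, -, -⟩ := hH
  choose w _ hw using hparallel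
  choose c hc using fun i => hw (g i) i rfl
  refine ⟨fun i => (innerₛₗ ℝ (w (g i))).toAffineMap - AffineMap.const ℝ _ (c i), ?_⟩
  ext i x
  simp [hc i, PiLp.inner_apply, sub_eq_zero, mul_comm]

lemma injOn_of_nonempty_iInter (hH : IsGPPH d n g k H) {S : Finset ι}
    (hS : (⋂ i ∈ S, H i).Nonempty) : Set.InjOn g S := by
  obtain ⟨-, hparallel, hdistinct, -⟩ := hH
  obtain ⟨x, hx⟩ := hS
  rw [Set.mem_iInter₂] at hx
  intro i hi j hj hij
  by_contra hne
  obtain ⟨w, -, hw⟩ := hparallel (g i)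
  obtain ⟨a, ha⟩ := hw i rfl
  obtain ⟨b, hb⟩ := hw j hij.symm
  have hxa : ∑ t, w t * x t = a := by simpa [ha] using hx i hi
  have hxb : ∑ t, w t * x t = b := by simpa [hb] using hx j hj
  exact hdistinct i j hne hij (by rw [ha, hb, ← hxa, ← hxb])

lemma nonempty_iInter_iff (hH : IsGPPH d n g k H) {S : Finset ι} :
    (⋂ i ∈ S, H i).Nonempty ↔ Set.InjOn g S ∧ S.card ≤ d := by
  refine ⟨fun hS => ?_, fun ⟨hinj, hcard⟩ => ?_⟩
  · have hinj := hH.injOn_of_nonempty_iInter hS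
    refine ⟨hinj, not_lt.1 fun hlt => hS.ne_empty ((hH.2.2.2 S hinj).2 hlt)⟩
  · obtain ⟨-, -, hne, -⟩ := (hH.2.2.2 S hinj).1 hcard
    exact hne

lemma isAffineOfDim_iInter (hH : IsGPPH d n g k H) {S : Finset ι}
    (hS : (⋂ i ∈ S, H i).Nonempty) : IsAffineOfDim d (d - S.card) (⋂ i ∈ S, H i) :=
  have ⟨hinj, hcard⟩ := hH.nonempty_iInter_iff.1 hS
  (hH.2.2.2 S hinj).1 hcard

lemma not_iInter_subset (hH : IsGPPH d n g k H) {S : Finset ι} {i : ι} (hi : i ∉ S)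
    (hS : (⋂ j ∈ S, H j).Nonempty) : ¬ (⋂ j ∈ S, H j) ⊆ H i := by
  classical
  intro hsub
  have hinsert : ⋂ j ∈ insert i S, H j = ⋂ j ∈ S, H j := by
    rw [Finset.set_biInter_insert, Set.inter_eq_right.2 hsub]
  have hS' : (⋂ j ∈ insert i S, H j).Nonempty := hinsert ▸ hS
  obtain ⟨A, hA, -, hdimA⟩ := hH.isAffineOfDim_iInter hS
  obtain ⟨B, hB, -, hdimB⟩ := hH.isAffineOfDim_iInter hS'
  have hcard := (hH.nonempty_iInter_iff.1 hS').2
  obtain rfl : A = B := SetLike.coe_injective (by rw [hA, hB, hinsert])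
  rw [Finset.card_insert_of_notMem hi] at hdimB hcard
  omega

lemma numRegions_eq_sum_prod (hH : IsGPPH d n g k H) :
    numRegions (⋃ i, H i) = ∑ U : Finset (Fin n) with U.card ≤ d, ∏ l ∈ U, k l := by
  obtain ⟨f, rfl⟩ := hH.exists_affineMap
  have hflat (S : Finset ι) :
      (flat f S : Set (EuclideanSpace ℝ (Fin d))) = ⋂ i ∈ S, {x | f i x = 0} := by
    ext x
    simp [mem_flat]
  have htrans : IsTransverse f := fun S i hi hS =>
    Set.not_subset.1 (hflat S ▸ hH.not_iInter_subset hi (hflat S ▸ hS))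
  calc numRegions (⋃ i, {x | f i x = 0})
      = {S : Finset ι | (flat f S : Set (EuclideanSpace ℝ (Fin d))).Nonempty}.ncard := by
        rw [numRegions_eq_ncard_signVectors, htrans.ncard_signVectors_univ]
    _ = {S : Finset ι | Set.InjOn g S ∧ S.card ≤ d}.ncard := by
        simp only [hflat, hH.nonempty_iInter_iff]
    _ = ∑ U : Finset (Fin n) with U.card ≤ d, ∏ l ∈ U, k l := by
        simp only [ncard_injOn_card_le, hH.1]

end IsGPPH

/-- Any two arrangements in `Λ_d((k_1,…,k_n))` have the same number of
regions. -/
theorem numRegions_eq_of_isGPPH {d n : ℕ} (hd : 1 ≤ d) (hn : 1 ≤ n)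
    (k : Fin n → ℕ) (hk : ∀ l, 1 ≤ k l)
    {ι₁ ι₂ : Type} [Fintype ι₁] [Fintype ι₂]
    (g₁ : ι₁ → Fin n) (H₁ : ι₁ → Set (EuclideanSpace ℝ (Fin d)))
    (g₂ : ι₂ → Fin n) (H₂ : ι₂ → Set (EuclideanSpace ℝ (Fin d)))
    (hGP₁ : IsGPPH d n g₁ k H₁) (hGP₂ : IsGPPH d n g₂ k H₂) :
    numRegions (⋃ i, H₁ i) = numRegions (⋃ i, H₂ i) := by
  rw [hGP₁.numRegions_eq_sum_prod, hGP₂.numRegions_eq_sum_prod]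

end
end

section
/- Let n, d > 1 and let A, B ∈ ℕ. Suppose that |R^±(ℋ′)| ≤ A for every arrangement ℋ′ ∈ Λ_d(n−1,2) of the ± type, and |R^±(ℋ″)| ≤ B for every arrangement ℋ″ ∈ Λ_{d−1}(n−1,2) of the ± type. Then |R^±(ℋ)| ≤ A + B for every arrangement ℋ ∈ Λ_d(n,2) of the ± type. -/
noncomputable section

/-- The arrangement of the `2n` hyperplanes `{x : ωⱼᵀx = bⱼ}`, `{x : ωⱼᵀx = aⱼ}`. -/
def pmHyperplanes {d : ℕ} (n : ℕ) (ω : Fin n → EuclideanSpace ℝ (Fin d)) (a b : Fin n → ℝ)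
    (p : Bool × Fin n) : Set (EuclideanSpace ℝ (Fin d)) :=
  {x | (∑ t, ω p.2 t * x t) = if p.1 then b p.2 else a p.2}

/-- An arrangement of the `±` type: `a_j < b_j`, the `ω_j` are nonzero, and the `2n`
hyperplanes `{ωⱼᵀx = bⱼ}`, `{ωⱼᵀx = aⱼ}`, grouped into the `n` parallel pairs, are in
general position modulo parallel hyperplanes, i.e. the arrangement lies in `Λ_d(n,2)`. -/
def IsPMArrangement (d n : ℕ) (ω : Fin n → EuclideanSpace ℝ (Fin d)) (a b : Fin n → ℝ) :
    Prop :=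
  (∀ j, ω j ≠ 0) ∧ (∀ j, a j < b j) ∧
    IsGPPH d n Prod.snd (fun _ => 2) (pmHyperplanes n ω a b)

/-- `R^±(ℋ)`: the regions `C` of the arrangement such that every `x ∈ C` satisfies, for
every `j`, either `ωⱼᵀx ≤ aⱼ` or `ωⱼᵀx ≥ bⱼ`. -/
def pmRegions {d : ℕ} (n : ℕ) (ω : Fin n → EuclideanSpace ℝ (Fin d)) (a b : Fin n → ℝ) :
    Set (Set (EuclideanSpace ℝ (Fin d))) :=
  {C ∈ regionsOf (⋃ p, pmHyperplanes n ω a b p) |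
    ∀ x ∈ C, ∀ j, (∑ t, ω j t * x t) ≤ a j ∨ b j ≤ ∑ t, ω j t * x t}

/-!
Since `a j < b j` for every `j`, a region in `R^±` is a nonempty cell obtained by choosing, for each
`j`, one of the two half-spaces `{ωⱼᵀx < aⱼ}` and `{bⱼ < ωⱼᵀx}`, so `|R^±|` counts the realized sign
patterns. Delete the first coordinate of each pattern: a pattern `τ` of the remaining pairs is hit
once or twice. Those hit at least once are realized by the arrangement without the first pair, which
gives `A`. If `τ` is hit twice, its convex cell has points on both sides of the hyperplane
`{ω₀ᵀx = a₀}`, hence meets it, so `τ` is realized by the arrangement induced on this hyperplane. In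
coordinates that is an arrangement of the `±` type in dimension `d - 1`, which gives `B`.
-/

section SignCell

/-- The two open sides of the slab `{x | a ≤ f x ≤ b}`; `true` is the side above `b` and `false`
the side below `a`. -/
def slabSide {X : Type*} (f : X → ℝ) (a b : ℝ) : Bool → Set X
  | true => {x | b < f x}
  | false => {x | f x < a}

/-- The cell of the sign pattern `σ`: the points lying, for every `j`, on the side `σ j` of the
`j`-th slab. -/
def signCell {X ι : Type*} (f : ι → X → ℝ) (a b : ι → ℝ) (σ : ι → Bool) : Set X :=
  {x | ∀ j, x ∈ slabSide (f j) (a j) (b j) (σ j)}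

/-- The sign patterns whose cell meets `S`. -/
def signPatterns {X ι : Type*} (f : ι → X → ℝ) (a b : ι → ℝ) (S : Set X) : Set (ι → Bool) :=
  {σ | (S ∩ signCell f a b σ).Nonempty}

variable {X Y ι : Type*}

theorem slabSide_comp (f : X → ℝ) (φ : Y → X) (a b : ℝ) (s : Bool) :
    slabSide (f ∘ φ) a b s = φ ⁻¹' slabSide f a b s := by
  cases s <;> rfl

theorem ne_and_ne_of_mem_slabSide {f : X → ℝ} {a b : ℝ} (hab : a < b) {s : Bool} {x : X}
    (hx : x ∈ slabSide f a b s) : f x ≠ a ∧ f x ≠ b := by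
  cases s with
  | true => exact ⟨(hab.trans hx).ne', ne_of_gt hx⟩
  | false => exact ⟨ne_of_lt hx, (lt_trans hx hab).ne⟩

theorem le_or_le_of_mem_slabSide {f : X → ℝ} {a b : ℝ} {s : Bool} {x : X}
    (hx : x ∈ slabSide f a b s) : f x ≤ a ∨ b ≤ f x := by
  cases s with
  | true => exact Or.inr (le_of_lt hx)
  | false => exact Or.inl (le_of_lt hx)

theorem exists_mem_slabSide {f : X → ℝ} {a b : ℝ} {x : X} (hne : f x ≠ a ∧ f x ≠ b)
    (hle : f x ≤ a ∨ b ≤ f x) : ∃ s, x ∈ slabSide f a b s := by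
  rcases hle with hle | hle
  · exact ⟨false, lt_of_le_of_ne hle hne.1⟩
  · exact ⟨true, lt_of_le_of_ne hle hne.2.symm⟩

theorem eq_of_mem_slabSide {f : X → ℝ} {a b : ℝ} (hab : a ≤ b) {s t : Bool} {x : X}
    (hs : x ∈ slabSide f a b s) (ht : x ∈ slabSide f a b t) : s = t := by
  have not_both : ¬(b < f x ∧ f x < a) := fun h => (h.1.trans h.2).not_ge hab
  cases s <;> cases t
  · rfl
  · exact (not_both ⟨ht, hs⟩).elim
  · exact (not_both ⟨hs, ht⟩).elim
  · rfl

theorem injOn_signCell {f : ι → X → ℝ} {a b : ι → ℝ} (hab : ∀ j, a j ≤ b j) (S : Set X) :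
    Set.InjOn (signCell f a b) (signPatterns f a b S) := by
  rintro σ ⟨x, -, hσ⟩ τ - h
  have hτ : x ∈ signCell f a b τ := h ▸ hσ
  exact funext fun j => eq_of_mem_slabSide (hab j) (hσ j) (hτ j)

theorem signCell_comp (f : ι → X → ℝ) (φ : Y → X) (a b : ι → ℝ) (σ : ι → Bool) :
    signCell (fun j => f j ∘ φ) a b σ = φ ⁻¹' signCell f a b σ := by
  simp only [signCell, slabSide_comp, Set.mem_preimage, Set.preimage_ofPred_eq]

theorem signPatterns_range (f : ι → X → ℝ) (a b : ι → ℝ) (φ : Y → X) :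
    signPatterns f a b (Set.range φ) = signPatterns (fun j => f j ∘ φ) a b Set.univ := by
  ext σ
  rw [signPatterns, signPatterns, Set.mem_ofPred_eq, Set.mem_ofPred_eq, signCell_comp,
    Set.univ_inter, Set.inter_comm, ← Set.nonempty_preimage_iff]

theorem signCell_sub_const (f : ι → X → ℝ) (a b c : ι → ℝ) (σ : ι → Bool) :
    signCell (fun j x => f j x - c j) (fun j => a j - c j) (fun j => b j - c j) σ =
      signCell f a b σ := by
  ext x
  refine forall_congr' fun j => ?_
  cases σ j
  · exact sub_lt_sub_iff_right (c j)
  · exact sub_lt_sub_iff_right (c j)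

theorem mem_signCell_cons {n : ℕ} {f : Fin (n + 1) → X → ℝ} {a b : Fin (n + 1) → ℝ} {s : Bool}
    {τ : Fin n → Bool} {x : X} :
    x ∈ signCell f a b (Fin.cons s τ : Fin (n + 1) → Bool) ↔
      x ∈ slabSide (f 0) (a 0) (b 0) s ∧
        x ∈ signCell (f ∘ Fin.succ) (a ∘ Fin.succ) (b ∘ Fin.succ) τ :=
  Fin.forall_fin_succ

variable [TopologicalSpace X]

theorem subset_slabSide_of_isPreconnected {f : X → ℝ} {a b : ℝ} {C : Set X}
    (hC : IsPreconnected C) (hf : ContinuousOn f C) (hne : ∀ y ∈ C, f y ≠ a ∧ f y ≠ b)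
    {s : Bool} {x : X} (hxC : x ∈ C) (hx : x ∈ slabSide f a b s) : C ⊆ slabSide f a b s := by
  intro y hy
  cases s with
  | true =>
    by_contra hlt
    obtain ⟨z, hz, hzb⟩ := hC.intermediate_value hy hxC hf ⟨not_lt.1 hlt, le_of_lt hx⟩
    exact (hne z hz).2 hzb
  | false =>
    by_contra hlt
    obtain ⟨z, hz, hza⟩ := hC.intermediate_value hxC hy hf ⟨le_of_lt hx, not_lt.1 hlt⟩
    exact (hne z hz).1 hza

theorem connectedComponentIn_eq_signCell {f : ι → X → ℝ} {a b : ι → ℝ}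
    (hf : ∀ j, Continuous (f j)) (hab : ∀ j, a j < b j) {σ : ι → Bool}
    (hσ : IsPreconnected (signCell f a b σ)) {x : X} (hx : x ∈ signCell f a b σ) :
    connectedComponentIn {y | ∀ j, f j y ≠ a j ∧ f j y ≠ b j} x = signCell f a b σ := by
  have cell_subset : signCell f a b σ ⊆ {y | ∀ j, f j y ≠ a j ∧ f j y ≠ b j} :=
    fun y hy j => ne_and_ne_of_mem_slabSide (hab j) (hy j)
  have component_subset := connectedComponentIn_subset {y | ∀ j, f j y ≠ a j ∧ f j y ≠ b j} x
  refine Set.Subset.antisymm (fun y hy j => ?_) (hσ.subset_connectedComponentIn hx cell_subset)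
  exact subset_slabSide_of_isPreconnected isPreconnected_connectedComponentIn
    (hf j).continuousOn (fun z hz => component_subset hz j)
    (mem_connectedComponentIn (cell_subset hx)) (hx j) hy

end SignCell

section DeletionRestriction

/-- The sign patterns that, extended by the sign `s` in front, belong to `T`. -/
def consSlice {n : ℕ} (T : Set (Fin (n + 1) → Bool)) (s : Bool) : Set (Fin n → Bool) :=
  {τ | (Fin.cons s τ : Fin (n + 1) → Bool) ∈ T}

theorem ncard_eq_ncard_consSlice_union_add_inter {n : ℕ} (T : Set (Fin (n + 1) → Bool)) :
    T.ncard = (consSlice T true ∪ consSlice T false).ncard +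
      (consSlice T true ∩ consSlice T false).ncard := by
  let prepend (s : Bool) (τ : Fin n → Bool) : Fin (n + 1) → Bool := Fin.cons s τ
  have union_prepend :
      T = prepend true '' consSlice T true ∪ prepend false '' consSlice T false := by
    ext σ
    constructor
    · intro hσ
      rw [← Fin.cons_self_tail σ] at hσ ⊢
      cases h : σ 0 <;> rw [h] at hσ
      · exact Or.inr ⟨_, hσ, rfl⟩
      · exact Or.inl ⟨_, hσ, rfl⟩
    · rintro (⟨τ, hτ, rfl⟩ | ⟨τ, hτ, rfl⟩) <;> exact hτ
  have disjoint_prepend :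
      Disjoint (prepend true '' consSlice T true) (prepend false '' consSlice T false) := by
    rw [Set.disjoint_left]
    rintro _ ⟨τ, -, rfl⟩ ⟨τ', -, h⟩
    exact Bool.false_ne_true (congrFun h 0)
  calc T.ncard
      = (prepend true '' consSlice T true).ncard + (prepend false '' consSlice T false).ncard := by
        conv_lhs => rw [union_prepend]
        exact Set.ncard_union_eq disjoint_prepend
    _ = (consSlice T true).ncard + (consSlice T false).ncard := by
        have prepend_injective (s : Bool) : Function.Injective (prepend s) :=
          Fin.cons_right_injective (α := fun _ => Bool) s
        rw [Set.ncard_image_of_injective _ (prepend_injective true),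
          Set.ncard_image_of_injective _ (prepend_injective false)]
    _ = _ := (Set.ncard_union_add_ncard_inter _ _).symm

theorem ncard_signPatterns_le {X : Type*} [TopologicalSpace X] {n : ℕ}
    {f : Fin (n + 1) → X → ℝ} {a b : Fin (n + 1) → ℝ} {S : Set X} {c : ℝ} (hf : Continuous (f 0))
    (hc : c ∈ Set.Icc (a 0) (b 0))
    (hconn : ∀ τ, IsPreconnected
      (S ∩ signCell (f ∘ Fin.succ) (a ∘ Fin.succ) (b ∘ Fin.succ) τ)) :
    (signPatterns f a b S).ncard ≤
      (signPatterns (f ∘ Fin.succ) (a ∘ Fin.succ) (b ∘ Fin.succ) S).ncard +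
      (signPatterns (f ∘ Fin.succ) (a ∘ Fin.succ) (b ∘ Fin.succ) (S ∩ {x | f 0 x = c})).ncard := by
  rw [ncard_eq_ncard_consSlice_union_add_inter]
  refine add_le_add (Set.ncard_le_ncard ?_) (Set.ncard_le_ncard ?_)
  · rintro τ (⟨x, hxS, hx⟩ | ⟨x, hxS, hx⟩) <;> exact ⟨x, hxS, (mem_signCell_cons.1 hx).2⟩
  · rintro τ ⟨⟨x, hxS, hx⟩, ⟨y, hyS, hy⟩⟩
    obtain ⟨hx_above, hxτ⟩ := mem_signCell_cons.1 hx
    obtain ⟨hy_below, hyτ⟩ := mem_signCell_cons.1 hy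
    obtain ⟨z, ⟨hzS, hzτ⟩, hzc⟩ := (hconn τ).intermediate_value ⟨hyS, hyτ⟩ ⟨hxS, hxτ⟩
      hf.continuousOn ⟨(lt_of_lt_of_le hy_below hc.1).le, (lt_of_le_of_lt hc.2 hx_above).le⟩
    exact ⟨z, ⟨hzS, hzc⟩, hzτ⟩

end DeletionRestriction

section InnerForms

open scoped RealInnerProductSpace

/-- The linear forms `x ↦ ⟪ω j, x⟫`, which on `ℝ^d` are `x ↦ ωⱼᵀx`. -/
def innerForms {ι E : Type*} [NormedAddCommGroup E] [InnerProductSpace ℝ E] (ω : ι → E) :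
    ι → E → ℝ :=
  fun j x => ⟪ω j, x⟫

variable {ι E F : Type*} [NormedAddCommGroup E] [InnerProductSpace ℝ E]
  [NormedAddCommGroup F] [InnerProductSpace ℝ F]

theorem continuous_innerForms (ω : ι → E) (j : ι) : Continuous (innerForms ω j) :=
  continuous_const.inner continuous_id

theorem convex_signCell_innerForms (ω : ι → E) (a b : ι → ℝ) (σ : ι → Bool) :
    Convex ℝ (signCell (innerForms ω) a b σ) := by
  have convex_side (j : ι) : Convex ℝ (slabSide (innerForms ω j) (a j) (b j) (σ j)) := by
    cases σ j
    · exact convex_halfSpace_lt (innerₗ E (ω j)).isLinear _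
    · exact convex_halfSpace_gt (innerₗ E (ω j)).isLinear _
  simpa only [signCell, Set.ofPred_forall, Set.ofPred_mem_eq] using convex_iInter convex_side

variable [FiniteDimensional ℝ E] [FiniteDimensional ℝ F]

/-- The normal vectors of the linear parts of the affine forms `y ↦ ⟪ω j, φ y⟫`. -/
def pullbackNormals (φ : F →ᵃ[ℝ] E) (ω : ι → E) : ι → F :=
  fun j => LinearMap.adjoint φ.linear (ω j)

/-- The levels `c j` shifted by the constant parts of the affine forms `y ↦ ⟪ω j, φ y⟫`, so that
`⟪pullbackNormals φ ω j, y⟫` compares to the shifted level as `⟪ω j, φ y⟫` does to `c j`. -/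
def pullbackLevels (φ : F →ᵃ[ℝ] E) (ω : ι → E) (c : ι → ℝ) : ι → ℝ :=
  fun j => c j - ⟪ω j, φ 0⟫

theorem inner_pullbackNormals (φ : F →ᵃ[ℝ] E) (ω : ι → E) (j : ι) (y : F) :
    ⟪pullbackNormals φ ω j, y⟫ = ⟪ω j, φ y⟫ - ⟪ω j, φ 0⟫ := by
  rw [pullbackNormals, LinearMap.adjoint_inner_left, ← inner_sub_right, φ.decomp']
  rfl

theorem inner_pullbackNormals_eq_pullbackLevels_iff (φ : F →ᵃ[ℝ] E) (ω : ι → E) (c : ι → ℝ)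
    (j : ι) (y : F) :
    ⟪pullbackNormals φ ω j, y⟫ = pullbackLevels φ ω c j ↔ ⟪ω j, φ y⟫ = c j := by
  rw [inner_pullbackNormals, pullbackLevels, sub_left_inj]

theorem signPatterns_pullback (φ : F →ᵃ[ℝ] E) (ω : ι → E) (a b : ι → ℝ) :
    signPatterns (innerForms (pullbackNormals φ ω)) (pullbackLevels φ ω a)
        (pullbackLevels φ ω b) Set.univ =
      signPatterns (innerForms ω) a b (Set.range φ) := by
  have forms_eq : innerForms (pullbackNormals φ ω) =
      fun j y => (innerForms ω j ∘ φ) y - ⟪ω j, φ 0⟫ := by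
    funext j y
    exact inner_pullbackNormals φ ω j y
  rw [signPatterns_range, forms_eq]
  unfold pullbackLevels
  simp only [signPatterns, signCell_sub_const]

end InnerForms

section AffineSubspace

variable {k V W : Type*} [Field k] [AddCommGroup V] [Module k V] [AddCommGroup W] [Module k W]

theorem exists_injective_affineMap_range_eq [FiniteDimensional k V]
    (A : AffineSubspace k W) [FiniteDimensional k A.direction] (hA : (A : Set W).Nonempty)
    (hdim : Module.finrank k A.direction = Module.finrank k V) :
    ∃ φ : V →ᵃ[k] W, Function.Injective φ ∧ Set.range φ = A := by
  obtain ⟨p, hp⟩ := hA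
  let e : V ≃ₗ[k] A.direction := LinearEquiv.ofFinrankEq _ _ hdim.symm
  let φ : V →ᵃ[k] W := (A.direction.subtype ∘ₗ e.toLinearMap).toAffineMap + AffineMap.const k V p
  have φ_apply (v : V) : φ v = (e v : W) +ᵥ p := rfl
  refine ⟨φ, φ.linear_injective_iff.1 ?_, Set.Subset.antisymm ?_ fun x hx => ?_⟩
  · simpa [φ] using A.direction.injective_subtype.comp e.injective
  · rintro _ ⟨v, rfl⟩
    exact AffineSubspace.vadd_mem_of_mem_direction (e v).2 hp
  · refine ⟨e.symm ⟨x -ᵥ p, AffineSubspace.vsub_mem_direction hx hp⟩, ?_⟩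
    rw [φ_apply, LinearEquiv.apply_symm_apply, vsub_vadd]

theorem finrank_direction_comap_of_injective {φ : V →ᵃ[k] W} (hφ : Function.Injective φ)
    {A : AffineSubspace k W} (hA : (A : Set W) ⊆ Set.range φ) :
    Module.finrank k (A.comap φ).direction = Module.finrank k A.direction := by
  have map_comap : (A.comap φ).map φ = A :=
    SetLike.coe_injective (Set.image_preimage_eq_of_subset hA)
  have linear_injective : Function.Injective φ.linear := φ.linear_injective_iff.2 hφ
  rw [(Submodule.equivMapOfInjective φ.linear linear_injective _).finrank_eq,
    ← AffineSubspace.map_direction, map_comap]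

theorem IsAffineOfDim.exists_injective_affineMap {d m : ℕ} {S : Set (EuclideanSpace ℝ (Fin d))}
    (hS : IsAffineOfDim d m S) :
    ∃ φ : EuclideanSpace ℝ (Fin m) →ᵃ[ℝ] EuclideanSpace ℝ (Fin d),
      Function.Injective φ ∧ Set.range φ = S := by
  obtain ⟨A, rfl, hne, hdim⟩ := hS
  exact exists_injective_affineMap_range_eq A hne (hdim.trans finrank_euclideanSpace_fin.symm)

theorem IsAffineOfDim.preimage {d e m : ℕ} {S : Set (EuclideanSpace ℝ (Fin d))}
    (hS : IsAffineOfDim d m S) {φ : EuclideanSpace ℝ (Fin e) →ᵃ[ℝ] EuclideanSpace ℝ (Fin d)}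
    (hφ : Function.Injective φ) (hSφ : S ⊆ Set.range φ) : IsAffineOfDim e m (φ ⁻¹' S) := by
  obtain ⟨A, rfl, ⟨x, hx⟩, hdim⟩ := hS
  obtain ⟨y, rfl⟩ := hSφ hx
  exact ⟨A.comap φ, rfl, ⟨y, hx⟩, (finrank_direction_comap_of_injective hφ hSφ).trans hdim⟩

end AffineSubspace

section GeneralPosition

/-- `S ⊆ ℝ^d` has the dimension expected of the intersection of `r` hyperplanes: it is an affine
subspace of dimension `d - r` if `r ≤ d`, and empty otherwise. -/
def HasExpectedDim (d r : ℕ) (S : Set (EuclideanSpace ℝ (Fin d))) : Prop :=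
  (r ≤ d → IsAffineOfDim d (d - r) S) ∧ (d < r → S = ∅)

/-- Members of `H` taken from pairwise distinct groups, as recorded by `g`, are in general position.
This is the last clause of `IsGPPH`. -/
def InGeneralPosition {κ ι : Type*} (d : ℕ) (g : κ → ι)
    (H : κ → Set (EuclideanSpace ℝ (Fin d))) : Prop :=
  ∀ S : Finset κ, Set.InjOn g S → HasExpectedDim d S.card (⋂ i ∈ S, H i)

theorem HasExpectedDim.preimage {e r : ℕ} {S : Set (EuclideanSpace ℝ (Fin (e + 1)))}
    (hS : HasExpectedDim (e + 1) (r + 1) S)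
    {φ : EuclideanSpace ℝ (Fin e) →ᵃ[ℝ] EuclideanSpace ℝ (Fin (e + 1))}
    (hφ : Function.Injective φ) (hSφ : S ⊆ Set.range φ) : HasExpectedDim e r (φ ⁻¹' S) := by
  refine ⟨fun hr => ?_, fun hr => ?_⟩
  · simpa only [Nat.add_sub_add_right] using (hS.1 (Nat.succ_le_succ hr)).preimage hφ hSφ
  · rw [hS.2 (Nat.succ_lt_succ hr), Set.preimage_empty]

variable {κ κ' ι ι' : Type*} {d : ℕ} {g : κ → ι} {g' : κ' → ι'}

theorem InGeneralPosition.isAffineOfDim {H : κ → Set (EuclideanSpace ℝ (Fin d))}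
    (h : InGeneralPosition d g H) (hd : 1 ≤ d) (i : κ) : IsAffineOfDim d (d - 1) (H i) := by
  simpa using (h {i} (by simp)).1 (by simpa using hd)

theorem injOn_map_of_semiconj {ρ : κ' ↪ κ} {θ : ι' → ι} (hθ : Function.Injective θ)
    (hρ : ∀ i, g (ρ i) = θ (g' i)) {S : Finset κ'} (hS : Set.InjOn g' S) :
    Set.InjOn g (S.map ρ) := by
  rw [Finset.coe_map]
  rintro _ ⟨p, hp, rfl⟩ _ ⟨q, hq, rfl⟩ hpq
  rw [hρ, hρ] at hpq
  rw [hS hp hq (hθ hpq)]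

theorem InGeneralPosition.reindex {H : κ → Set (EuclideanSpace ℝ (Fin d))}
    (h : InGeneralPosition d g H) {ρ : κ' ↪ κ} {θ : ι' → ι} (hθ : Function.Injective θ)
    (hρ : ∀ i, g (ρ i) = θ (g' i)) : InGeneralPosition d g' (H ∘ ρ) := by
  classical
  intro S hS
  have hdim := h (S.map ρ) (injOn_map_of_semiconj hθ hρ hS)
  rwa [Finset.card_map, Finset.map_eq_image, Finset.set_biInter_finset_image] at hdim

theorem InGeneralPosition.restrict {e : ℕ} {H : κ → Set (EuclideanSpace ℝ (Fin (e + 1)))}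
    (h : InGeneralPosition (e + 1) g H) {ρ : κ' ↪ κ} {θ : ι' → ι} (hθ : Function.Injective θ)
    (hρ : ∀ i, g (ρ i) = θ (g' i)) {i₀ : κ} (hi₀ : g i₀ ∉ Set.range θ)
    {φ : EuclideanSpace ℝ (Fin e) →ᵃ[ℝ] EuclideanSpace ℝ (Fin (e + 1))}
    (hφ : Function.Injective φ) (hrange : Set.range φ = H i₀) :
    InGeneralPosition e g' fun i => φ ⁻¹' H (ρ i) := by
  classical
  intro S hS
  have group_notMem : g i₀ ∉ g '' (S.map ρ) := by
    rw [Finset.coe_map]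
    rintro ⟨_, ⟨p, -, rfl⟩, hp⟩
    exact hi₀ ⟨g' p, (hρ p).symm.trans hp⟩
  have notMem : i₀ ∉ S.map ρ := fun hmem => group_notMem ⟨i₀, hmem, rfl⟩
  have hinj : Set.InjOn g (insert i₀ (S.map ρ) : Finset κ) := by
    rw [Finset.coe_insert, Set.injOn_insert (mod_cast notMem)]
    exact ⟨injOn_map_of_semiconj hθ hρ hS, group_notMem⟩
  have hdim := h _ hinj
  rw [Finset.card_insert_of_notMem notMem, Finset.card_map, Finset.set_biInter_insert,
    Finset.map_eq_image, Finset.set_biInter_finset_image, ← hrange] at hdim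
  simpa only [Set.preimage_inter, Set.preimage_range, Set.univ_inter, Set.preimage_iInter] using
    hdim.preimage hφ Set.inter_subset_left

end GeneralPosition

section PMArrangement

open scoped RealInnerProductSpace

variable {d n : ℕ} {ω : Fin n → EuclideanSpace ℝ (Fin d)} {a b : Fin n → ℝ}

theorem sum_mul_eq_inner (w x : EuclideanSpace ℝ (Fin d)) : ∑ t, w t * x t = ⟪w, x⟫ := by
  simp only [PiLp.inner_apply, RCLike.inner_apply, conj_trivial, mul_comm]

theorem mem_pmHyperplanes {p : Bool × Fin n} {x : EuclideanSpace ℝ (Fin d)} :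
    x ∈ pmHyperplanes n ω a b p ↔ ⟪ω p.2, x⟫ = if p.1 then b p.2 else a p.2 := by
  rw [← sum_mul_eq_inner]
  rfl

theorem compl_iUnion_pmHyperplanes (ω : Fin n → EuclideanSpace ℝ (Fin d)) (a b : Fin n → ℝ) :
    (⋃ p, pmHyperplanes n ω a b p)ᶜ =
      {x | ∀ j, innerForms ω j x ≠ a j ∧ innerForms ω j x ≠ b j} := by
  ext x
  simp [mem_pmHyperplanes, innerForms, forall_and]

theorem connectedComponentIn_compl_pmHyperplanes (hab : ∀ j, a j < b j) {σ : Fin n → Bool}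
    {x : EuclideanSpace ℝ (Fin d)} (hx : x ∈ signCell (innerForms ω) a b σ) :
    connectedComponentIn (⋃ p, pmHyperplanes n ω a b p)ᶜ x = signCell (innerForms ω) a b σ := by
  rw [compl_iUnion_pmHyperplanes]
  exact connectedComponentIn_eq_signCell (continuous_innerForms ω) hab
    (convex_signCell_innerForms ω a b σ).isPreconnected hx

theorem pmRegions_eq_image_signCell (hab : ∀ j, a j < b j) :
    pmRegions n ω a b =
      signCell (innerForms ω) a b '' signPatterns (innerForms ω) a b Set.univ := by
  ext C
  constructor
  · rintro ⟨⟨x, hx, rfl⟩, hside⟩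
    have outside (j : Fin n) : innerForms ω j x ≤ a j ∨ b j ≤ innerForms ω j x := by
      simpa only [innerForms, sum_mul_eq_inner] using hside x (mem_connectedComponentIn hx) j
    rw [compl_iUnion_pmHyperplanes] at hx
    choose σ hσ using fun j => exists_mem_slabSide (hx j) (outside j)
    exact ⟨σ, ⟨x, trivial, hσ⟩, (connectedComponentIn_compl_pmHyperplanes hab hσ).symm⟩
  · rintro ⟨σ, ⟨x, -, hx⟩, rfl⟩
    refine ⟨⟨x, ?_, (connectedComponentIn_compl_pmHyperplanes hab hx).symm⟩, fun y hy j => ?_⟩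
    · rw [compl_iUnion_pmHyperplanes]
      exact fun j => ne_and_ne_of_mem_slabSide (hab j) (hx j)
    · rw [sum_mul_eq_inner]
      exact le_or_le_of_mem_slabSide (hy j)

theorem ncard_pmRegions (hab : ∀ j, a j < b j) :
    (pmRegions n ω a b).ncard = (signPatterns (innerForms ω) a b Set.univ).ncard := by
  rw [pmRegions_eq_image_signCell hab]
  exact (injOn_signCell (fun j => (hab j).le) Set.univ).ncard_image

theorem IsPMArrangement.inGeneralPosition (h : IsPMArrangement d n ω a b) :
    InGeneralPosition d Prod.snd (pmHyperplanes n ω a b) :=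
  h.2.2.2.2.2

theorem normal_ne_zero_of_inGeneralPosition (hd : 1 ≤ d)
    (h : InGeneralPosition d Prod.snd (pmHyperplanes n ω a b)) (j : Fin n) : ω j ≠ 0 := by
  intro hj
  obtain ⟨A, hA, ⟨x, hx⟩, hdim⟩ := h.isAffineOfDim hd (true, j)
  have hA_top : A = ⊤ := by
    rw [mem_pmHyperplanes, hj, inner_zero_left] at hx
    refine SetLike.coe_injective (hA.trans (Set.eq_univ_of_forall fun y => ?_))
    rwa [mem_pmHyperplanes, hj, inner_zero_left]
  rw [hA_top, AffineSubspace.direction_top, finrank_top, finrank_euclideanSpace_fin] at hdim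
  omega

theorem pmHyperplanes_ne_of_lt (hab : ∀ j, a j < b j) {p q : Bool × Fin n} (hpq : p ≠ q)
    (hgroup : p.2 = q.2) (hp : (pmHyperplanes n ω a b p).Nonempty) :
    pmHyperplanes n ω a b p ≠ pmHyperplanes n ω a b q := by
  obtain ⟨s, j⟩ := p
  obtain ⟨t, _⟩ := q
  obtain rfl : j = _ := hgroup
  intro heq
  obtain ⟨x, hx⟩ := hp
  have hx' : x ∈ pmHyperplanes n ω a b (t, j) := heq ▸ hx
  have hlevel : (if s then b j else a j) = if t then b j else a j :=
    (mem_pmHyperplanes.1 hx).symm.trans (mem_pmHyperplanes.1 hx')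
  cases s <;> cases t
  · exact hpq rfl
  · exact (hab j).ne hlevel
  · exact (hab j).ne' hlevel
  · exact hpq rfl

theorem isPMArrangement_of_inGeneralPosition (hd : 1 ≤ d) (hab : ∀ j, a j < b j)
    (h : InGeneralPosition d Prod.snd (pmHyperplanes n ω a b)) : IsPMArrangement d n ω a b := by
  have normal_ne_zero := normal_ne_zero_of_inGeneralPosition hd h
  refine ⟨normal_ne_zero, hab, fun j => ?_, fun j => ⟨ω j, normal_ne_zero j, ?_⟩,
    fun p q hpq hgroup => ?_, h⟩
  · have group_eq : (Finset.univ.filter fun p : Bool × Fin n => p.2 = j) =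
        Finset.univ ×ˢ {j} := by
      ext p
      rw [Finset.mem_filter_univ, Finset.mem_product, Finset.mem_singleton]
      exact (and_iff_right (Finset.mem_univ p.1)).symm
    simp [group_eq]
  · rintro p rfl
    exact ⟨_, rfl⟩
  · obtain ⟨-, -, hp, -⟩ := h.isAffineOfDim hd p
    exact pmHyperplanes_ne_of_lt hab hpq hgroup hp

theorem IsPMArrangement.reindex {m : ℕ} (h : IsPMArrangement d n ω a b) (hd : 1 ≤ d)
    (ρ : Fin m ↪ Fin n) : IsPMArrangement d m (ω ∘ ρ) (a ∘ ρ) (b ∘ ρ) :=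
  isPMArrangement_of_inGeneralPosition hd (fun j => h.2.1 (ρ j))
    (h.inGeneralPosition.reindex (ρ := (Function.Embedding.refl Bool).prodMap ρ) ρ.injective
      fun _ => rfl)

theorem preimage_pmHyperplanes {e : ℕ}
    (φ : EuclideanSpace ℝ (Fin e) →ᵃ[ℝ] EuclideanSpace ℝ (Fin d)) (p : Bool × Fin n) :
    φ ⁻¹' pmHyperplanes n ω a b p =
      pmHyperplanes n (pullbackNormals φ ω) (pullbackLevels φ ω a) (pullbackLevels φ ω b) p := by
  ext y
  rw [Set.mem_preimage, mem_pmHyperplanes, mem_pmHyperplanes]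
  cases p.1
  · exact (inner_pullbackNormals_eq_pullbackLevels_iff φ ω a p.2 y).symm
  · exact (inner_pullbackNormals_eq_pullbackLevels_iff φ ω b p.2 y).symm

theorem IsPMArrangement.restrict {e m : ℕ} {ω : Fin n → EuclideanSpace ℝ (Fin (e + 1))}
    (h : IsPMArrangement (e + 1) n ω a b) (he : 1 ≤ e) {p : Bool × Fin n} {ρ : Fin m ↪ Fin n}
    (hp : p.2 ∉ Set.range ρ) {φ : EuclideanSpace ℝ (Fin e) →ᵃ[ℝ] EuclideanSpace ℝ (Fin (e + 1))}
    (hφ : Function.Injective φ) (hrange : Set.range φ = pmHyperplanes n ω a b p) :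
    IsPMArrangement e m (pullbackNormals φ (ω ∘ ρ)) (pullbackLevels φ (ω ∘ ρ) (a ∘ ρ))
      (pullbackLevels φ (ω ∘ ρ) (b ∘ ρ)) := by
  refine isPMArrangement_of_inGeneralPosition he (fun j => sub_lt_sub_right (h.2.1 (ρ j)) _) ?_
  rw [← funext (preimage_pmHyperplanes φ)]
  exact h.inGeneralPosition.restrict (ρ := (Function.Embedding.refl Bool).prodMap ρ) ρ.injective
    (fun _ => rfl) hp hφ hrange

theorem ncard_signPatterns_innerForms_le {ω : Fin (n + 1) → EuclideanSpace ℝ (Fin d)}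
    {a b : Fin (n + 1) → ℝ} (hab : a 0 ≤ b 0) :
    (signPatterns (innerForms ω) a b Set.univ).ncard ≤
      (signPatterns (innerForms (ω ∘ Fin.succ)) (a ∘ Fin.succ) (b ∘ Fin.succ) Set.univ).ncard +
      (signPatterns (innerForms (ω ∘ Fin.succ)) (a ∘ Fin.succ) (b ∘ Fin.succ)
        (pmHyperplanes (n + 1) ω a b (false, 0))).ncard := by
  have hyperplane_eq : pmHyperplanes (n + 1) ω a b (false, 0) =
      Set.univ ∩ {x | innerForms ω 0 x = a 0} := by
    rw [Set.univ_inter]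
    ext x
    exact mem_pmHyperplanes
  rw [hyperplane_eq]
  exact ncard_signPatterns_le (continuous_innerForms ω 0) ⟨le_rfl, hab⟩
    fun τ => (convex_univ.inter (convex_signCell_innerForms _ _ _ τ)).isPreconnected

end PMArrangement

/-- Recursion for the number of `±` regions: if `|R^±| ≤ A` for all
`±`-type arrangements in `Λ_d(n−1,2)` and `|R^±| ≤ B` for all `±`-type arrangements in
`Λ_{d−1}(n−1,2)`, then `|R^±| ≤ A + B` for all `±`-type arrangements in `Λ_d(n,2)`. -/
theorem pmRegions_card_recursion (n d : ℕ) (hn : 1 < n) (hd : 1 < d) (A B : ℕ)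
    (hA : ∀ (ω : Fin (n - 1) → EuclideanSpace ℝ (Fin d)) (a b : Fin (n - 1) → ℝ),
      IsPMArrangement d (n - 1) ω a b → (pmRegions (n - 1) ω a b).ncard ≤ A)
    (hB : ∀ (ω : Fin (n - 1) → EuclideanSpace ℝ (Fin (d - 1))) (a b : Fin (n - 1) → ℝ),
      IsPMArrangement (d - 1) (n - 1) ω a b → (pmRegions (n - 1) ω a b).ncard ≤ B) :
    ∀ (ω : Fin n → EuclideanSpace ℝ (Fin d)) (a b : Fin n → ℝ),
      IsPMArrangement d n ω a b → (pmRegions n ω a b).ncard ≤ A + B := by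
  intro ω a b h
  obtain ⟨m, rfl⟩ : ∃ m, n = m + 1 := ⟨n - 1, by omega⟩
  obtain ⟨e, rfl⟩ : ∃ e, d = e + 1 := ⟨d - 1, by omega⟩
  obtain ⟨φ, hφ, hrange⟩ :=
    (h.inGeneralPosition.isAffineOfDim (by omega) (false, 0)).exists_injective_affineMap
  have hdelete : IsPMArrangement (e + 1) m (ω ∘ Fin.succ) (a ∘ Fin.succ) (b ∘ Fin.succ) :=
    h.reindex (by omega) (Fin.succEmb m)
  have hrestrict : IsPMArrangement e m (pullbackNormals φ (ω ∘ Fin.succ))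
      (pullbackLevels φ (ω ∘ Fin.succ) (a ∘ Fin.succ))
      (pullbackLevels φ (ω ∘ Fin.succ) (b ∘ Fin.succ)) :=
    h.restrict (ρ := Fin.succEmb m) (by omega) (by simp) hφ hrange
  have hcount := ncard_signPatterns_innerForms_le (ω := ω) (h.2.1 0).le
  rw [← hrange, ← signPatterns_pullback, ← ncard_pmRegions h.2.1, ← ncard_pmRegions hdelete.2.1,
    ← ncard_pmRegions hrestrict.2.1] at hcount
  exact hcount.trans (add_le_add (hA _ _ _ hdelete) (hB _ _ _ hrestrict))

end
end

section
/- Let M ⊂ ℝ^n be a d-dimensional affine subspace and φ : ℝ → ℝ a continuous piecewise linear function with |A(φ)| = k+1 linear pieces, k ≥ 1. Then the number of (k+1)-ary activation patterns realized on M, i.e. the number of tuples (I^{(1)},…,I^{(n)}) ∈ A(φ)^n for which the set {x ∈ M : x^{(l)} ∈ I^{(l)} for all l = 1,…,n} is nonempty, is at most F(d,n,k) := (k+1)·Σ_{j=0}^{d−1} C(n−1,j)·k^j + k^d·Σ_{j=d}^{n−1} C(j−1,d−1). -/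
noncomputable section

/-- `φ` is affine (linear in the loose sense) on `S`. -/
def AffineOn (φ : ℝ → ℝ) (S : Set ℝ) : Prop :=
  ∃ m c : ℝ, ∀ x ∈ S, φ x = m * x + c

/-- `φ` is a continuous piecewise linear (PWL) function whose set of linear regions is the
finite collection `A` of pairwise disjoint, nonempty open intervals whose closures cover `ℝ`,
with `φ` affine on each of them and each of them maximal with this property. -/
structure IsPWLWith (φ : ℝ → ℝ) (A : Finset (Set ℝ)) : Prop where
  cont : Continuous φ
  nonempty : ∀ I ∈ A, I.Nonempty
  isOpen : ∀ I ∈ A, IsOpen I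
  ordConn : ∀ I ∈ A, I.OrdConnected
  disjoint : ∀ I ∈ A, ∀ J ∈ A, I ≠ J → I ∩ J = ∅
  covers : (⋃ I ∈ A, closure I) = Set.univ
  affine : ∀ I ∈ A, AffineOn φ I
  maximal : ∀ I ∈ A, ∀ Z : Set ℝ, IsOpen Z → Z.OrdConnected → I ⊆ Z → AffineOn φ Z → Z ⊆ I

/-- The upper-bound quantity
`F(d,n,k) = (k+1)·Σ_{j<d} C(n−1,j)·k^j + k^d·Σ_{j=d}^{n−1} C(j−1,d−1)`. -/
def Fbound (d n k : ℕ) : ℕ :=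
  (k + 1) * ∑ j ∈ Finset.range d, Nat.choose (n - 1) j * k ^ j
    + k ^ d * ∑ j ∈ Finset.Icc d (n - 1), Nat.choose (j - 1) (d - 1)

/-!
Adjoining one more coordinate `f₀` to the others splits each cell `C ⊆ M` they cut out into the
pieces of `A₀` met by the interval `f₀(C)`. Consecutive pieces met by an interval are separated by a
point of that interval, so at most `s + 1` pieces are met, where `s` counts the separators `b` for
which the hyperplane slice `M ∩ {f₀ = b}` meets `C`. There are at most `k` separators and each slice
has smaller dimension than `M` (unless `f₀` is constant on `M`, when nothing is split), so the
number of patterns obeys the recursion `G(d + 1, n + 1) = G(d + 1, n) + k G(d, n)` of the truncated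
binomial sums `G(d, n) = ∑_{j ≤ d} C(n, j) k ^ j`.
-/

open Finset

section Separation

variable {α : Type*}

theorem lt_of_ordConnected_of_disjoint [LinearOrder α] {s t : Set α} (hs : s.OrdConnected)
    (ht : t.OrdConnected) (hst : Disjoint s t) {a b x y : α} (ha : a ∈ s) (hb : b ∈ t)
    (hab : a ≤ b) (hx : x ∈ s) (hy : y ∈ t) : x < y := by
  by_contra! hyx
  rcases le_total b x with hbx | hxb
  · exact hst.notMem_of_mem_left (hs.out ha hx ⟨hab, hbx⟩) hb
  · exact hst.notMem_of_mem_left hx (ht.out hy hb ⟨hyx, hxb⟩)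

theorem exists_rightmost [LinearOrder α] {A : Finset (Set α)} (hA : A.Nonempty)
    (hconn : ∀ I ∈ A, I.OrdConnected) (hdisj : (A : Set (Set α)).PairwiseDisjoint id) :
    ∃ J ∈ A, ∀ I ∈ A, I ≠ J → ∀ x ∈ I, ∀ y ∈ J, x < y := by
  by_cases hempty : ∅ ∈ A
  · exact ⟨∅, hempty, by simp⟩
  · have hne : ∀ I ∈ A, I.Nonempty := fun I hI ↦
      Set.nonempty_iff_ne_empty.2 fun h ↦ hempty (h ▸ hI)
    have : Nonempty α := let ⟨I, hI⟩ := hA; (hne I hI).nonempty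
    choose! r hr using hne
    obtain ⟨J, hJ, hmax⟩ := A.exists_max_image r hA
    exact ⟨J, hJ, fun I hI hIJ x hx y hy ↦ lt_of_ordConnected_of_disjoint (hconn I hI) (hconn J hJ)
      (hdisj hI hJ hIJ) (hr I hI) (hr J hJ) (hmax I hI) hx hy⟩

open Classical in
theorem card_filter_meets_le_of_rightmost [ConditionallyCompleteLinearOrder α]
    {A : Finset (Set α)} (hconn : ∀ I ∈ A, I.OrdConnected)
    (hdisj : (A : Set (Set α)).PairwiseDisjoint id) {X : Set α}
    (hX : ∀ I ∈ A, I ≠ X → ∀ x ∈ I, ∀ y ∈ X, x < y) {S : Set α} (hS : S.OrdConnected) :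
    #{I ∈ A | (I ∩ S).Nonempty} ≤ #{I ∈ A.erase X | sSup I ∈ S} + 1 := by
  set T := {I ∈ A | (I ∩ S).Nonempty}
  rcases T.eq_empty_or_nonempty with hT₀ | hT₀
  · simp [hT₀]
  have hTA : T ⊆ A := filter_subset _ _
  obtain ⟨J, hJT, hJ⟩ := exists_rightmost hT₀ (fun I hI ↦ hconn I (hTA hI))
    (hdisj.subset (coe_subset.2 hTA))
  obtain ⟨z, hzJ, hzS⟩ := (mem_filter.1 hJT).2
  rw [← card_erase_add_one hJT]
  gcongr
  intro I hI
  obtain ⟨hIJ, hIT⟩ := mem_erase.1 hI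
  obtain ⟨y, hyI, hyS⟩ := (mem_filter.1 hIT).2
  have hlt : ∀ x ∈ I, x < z := fun x hx ↦ hJ I hIT hIJ x hx z hzJ
  have hIX : I ≠ X := by
    rintro rfl
    exact (hlt y hyI).asymm (hX J (hTA hJT) hIJ.symm z hzJ y hyI)
  have hsup : sSup I ∈ S := hS.out hyS hzS
    ⟨le_csSup ⟨z, fun x hx ↦ (hlt x hx).le⟩ hyI, csSup_le ⟨y, hyI⟩ fun x hx ↦ (hlt x hx).le⟩
  exact mem_filter.2 ⟨mem_erase.2 ⟨hIX, hTA hIT⟩, hsup⟩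

open Classical in
-- Separators are indexed by pieces because two of them may coincide, at a singleton piece.
theorem exists_separators [ConditionallyCompleteLinearOrder α] {A : Finset (Set α)}
    (hconn : ∀ I ∈ A, I.OrdConnected) (hdisj : (A : Set (Set α)).PairwiseDisjoint id) :
    ∃ B : Finset (Set α), #B = #A - 1 ∧ ∀ S : Set α, S.OrdConnected →
      #{I ∈ A | (I ∩ S).Nonempty} ≤ #{I ∈ B | sSup I ∈ S} + 1 := by
  rcases A.eq_empty_or_nonempty with rfl | hA
  · exact ⟨∅, by simp⟩
  · obtain ⟨X, hXA, hX⟩ := exists_rightmost hA hconn hdisj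
    exact ⟨A.erase X, card_erase_of_mem hXA,
      fun S hS ↦ card_filter_meets_le_of_rightmost hconn hdisj hX hS⟩

end Separation

theorem vectorSpan_inter_preimage_singleton_lt {k V P V' P' : Type*} [Ring k] [AddCommGroup V]
    [Module k V] [AddTorsor V P] [AddCommGroup V'] [Module k V'] [AddTorsor V' P']
    (f : P →ᵃ[k] P') {s : Set P} {x y : P} (hx : x ∈ s) (hy : y ∈ s) (hxy : f x ≠ f y) (c : P') :
    vectorSpan k (s ∩ f ⁻¹' {c}) < vectorSpan k s := by
  have hker : vectorSpan k (s ∩ f ⁻¹' {c}) ≤ LinearMap.ker f.linear := by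
    rw [vectorSpan_def, Submodule.span_le]
    rintro _ ⟨p, ⟨-, hp⟩, q, ⟨-, hq⟩, rfl⟩
    simp_all
  refine SetLike.lt_iff_le_and_exists.2 ⟨vectorSpan_mono k Set.inter_subset_left,
    x -ᵥ y, vsub_mem_vectorSpan k hx hy, fun hmem ↦ hxy ?_⟩
  simpa using hker hmem

section Patterns

variable {ι E β : Type*}

/-- The cell of `M` on which the coordinate functions `f` realize the pattern `I`, i.e. the points
`x ∈ M` with `f l x ∈ I l` for all `l`. -/
def patternCell (f : ι → E → β) (M : Set E) (I : ι → Set β) : Set E :=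
  {x ∈ M | ∀ l, f l x ∈ I l}

open Classical in
/-- The activation patterns realized on `M`, as a finset so that they can be summed over. The family
`A l` of admissible pieces may depend on the coordinate `l`. -/
def realizedPatterns [Fintype ι] (A : ι → Finset (Set β)) (f : ι → E → β) (M : Set E) :
    Finset (ι → Set β) :=
  {I ∈ Fintype.piFinset A | (patternCell f M I).Nonempty}

theorem mem_realizedPatterns [Fintype ι] {A : ι → Finset (Set β)} {f : ι → E → β} {M : Set E}
    {I : ι → Set β} :
    I ∈ realizedPatterns A f M ↔ (∀ l, I l ∈ A l) ∧ (patternCell f M I).Nonempty := by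
  simp [realizedPatterns]

theorem convex_patternCell [AddCommGroup E] [Module ℝ E] {f : ι → E →ᵃ[ℝ] ℝ} {M : Set E}
    (hM : Convex ℝ M) {I : ι → Set ℝ} (hI : ∀ l, (I l).OrdConnected) :
    Convex ℝ (patternCell (fun l ↦ f l) M I) := by
  have heq : patternCell (fun l ↦ f l) M I = M ∩ ⋂ l, f l ⁻¹' I l := by
    ext x; simp [patternCell]
  rw [heq]
  exact hM.inter (convex_iInter fun l ↦ (hI l).convex.affine_preimage (f l))

variable {n : ℕ}

open Classical in
theorem card_realizedPatterns_succ_le (A : Fin (n + 1) → Finset (Set β)) (f : Fin (n + 1) → E → β)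
    (M : Set E) :
    #(realizedPatterns A f M) ≤ ∑ p ∈ realizedPatterns (Fin.tail A) (Fin.tail f) M,
      #{I ∈ A 0 | (I ∩ f 0 '' patternCell (Fin.tail f) M p).Nonempty} := by
  have htail : ∀ q ∈ realizedPatterns A f M,
      Fin.tail q ∈ realizedPatterns (Fin.tail A) (Fin.tail f) M := by
    intro q hq
    obtain ⟨hqA, x, hxM, hx⟩ := mem_realizedPatterns.1 hq
    exact mem_realizedPatterns.2 ⟨fun l ↦ hqA l.succ, x, hxM, fun l ↦ hx l.succ⟩
  rw [card_eq_sum_card_fiberwise htail]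
  refine sum_le_sum fun p _ ↦ card_le_card_of_injOn (fun q ↦ q 0) ?_ ?_
  · intro q hq
    obtain ⟨hreal, rfl⟩ := mem_filter.1 hq
    obtain ⟨hqA, x, hxM, hx⟩ := mem_realizedPatterns.1 hreal
    have hcell : x ∈ patternCell (Fin.tail f) M (Fin.tail q) := ⟨hxM, fun l ↦ hx l.succ⟩
    exact mem_coe.2 (mem_filter.2 ⟨hqA 0, f 0 x, hx 0, Set.mem_image_of_mem (f 0) hcell⟩)
  · intro q hq q' hq' hhead
    have htails : Fin.tail q = Fin.tail q' := (mem_filter.1 hq).2.trans (mem_filter.1 hq').2.symm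
    rw [← Fin.cons_self_tail q, ← Fin.cons_self_tail q', htails]
    exact congrArg (Fin.cons · (Fin.tail q')) hhead

theorem card_realizedPatterns_succ_le_of_constant {A : Fin (n + 1) → Finset (Set β)}
    (hdisj : (A 0 : Set (Set β)).PairwiseDisjoint id) {f : Fin (n + 1) → E → β} {M : Set E}
    (hconst : ∀ x ∈ M, ∀ y ∈ M, f 0 x = f 0 y) :
    #(realizedPatterns A f M) ≤ #(realizedPatterns (Fin.tail A) (Fin.tail f) M) := by
  classical
  refine (card_realizedPatterns_succ_le A f M).trans ?_
  rw [card_eq_sum_ones]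
  refine sum_le_sum fun p _ ↦ card_le_one.2 fun I hI J hJ ↦ ?_
  obtain ⟨hIA, _, hxI, x, ⟨hxM, -⟩, rfl⟩ := mem_filter.1 hI
  obtain ⟨hJA, _, hyJ, y, ⟨hyM, -⟩, rfl⟩ := mem_filter.1 hJ
  exact hdisj.elim_set hIA hJA _ hxI (hconst x hxM y hyM ▸ hyJ)

open Classical in
theorem filter_mem_image_patternCell_subset [Fintype ι] (A : ι → Finset (Set β)) (f : ι → E → β)
    (g : E → β) (M : Set E) (c : β) :
    {p ∈ realizedPatterns A f M | c ∈ g '' patternCell f M p} ⊆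
      realizedPatterns A f (M ∩ g ⁻¹' {c}) := by
  intro p hp
  obtain ⟨hreal, x, ⟨hxM, hx⟩, hxc⟩ := mem_filter.1 hp
  exact mem_realizedPatterns.2 ⟨(mem_realizedPatterns.1 hreal).1, x, ⟨hxM, hxc⟩, hx⟩

variable [AddCommGroup E] [Module ℝ E]

theorem exists_card_realizedPatterns_succ_le_add_sum {A : Fin (n + 1) → Finset (Set ℝ)}
    (hconn : ∀ l, ∀ I ∈ A l, I.OrdConnected) (hdisj : (A 0 : Set (Set ℝ)).PairwiseDisjoint id) :
    ∃ B : Finset (Set ℝ), #B = #(A 0) - 1 ∧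
      ∀ (f : Fin (n + 1) → E →ᵃ[ℝ] ℝ) (M : Set E), Convex ℝ M →
        #(realizedPatterns A (fun l ↦ f l) M) ≤
          #(realizedPatterns (Fin.tail A) (fun l ↦ Fin.tail f l) M) +
          ∑ I ∈ B, #(realizedPatterns (Fin.tail A) (fun l ↦ Fin.tail f l)
            (M ∩ f 0 ⁻¹' {sSup I})) := by
  classical
  obtain ⟨B, hBcard, hB⟩ := exists_separators (hconn 0) hdisj
  refine ⟨B, hBcard, fun f M hM ↦ ?_⟩
  set P := realizedPatterns (Fin.tail A) (fun l ↦ Fin.tail f l) M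
  set interval : (Fin n → Set ℝ) → Set ℝ := fun p ↦ f 0 '' patternCell (fun l ↦ Fin.tail f l) M p
  have hinterval : ∀ p ∈ P, (interval p).OrdConnected := fun p hp ↦
    ((convex_patternCell hM fun l ↦
      hconn l.succ _ ((mem_realizedPatterns.1 hp).1 l)).affine_image (f 0)).ordConnected
  calc #(realizedPatterns A (fun l ↦ f l) M)
      ≤ ∑ p ∈ P, #{I ∈ A 0 | (I ∩ interval p).Nonempty} :=
        card_realizedPatterns_succ_le A (fun l ↦ f l) M
    _ ≤ ∑ p ∈ P, (#{I ∈ B | sSup I ∈ interval p} + 1) :=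
        sum_le_sum fun p hp ↦ hB _ (hinterval p hp)
    _ = #P + ∑ p ∈ P, #{I ∈ B | sSup I ∈ interval p} := by
        rw [sum_add_distrib, ← card_eq_sum_ones, add_comm]
    _ = #P + ∑ I ∈ B, #{p ∈ P | sSup I ∈ interval p} := by
        congr 1
        exact sum_card_bipartiteAbove_eq_sum_card_bipartiteBelow fun p I ↦ sSup I ∈ interval p
    _ ≤ _ := by
        gcongr with I
        exact filter_mem_image_patternCell_subset _ _ _ _ _

end Patterns

/-- The binomial expansion `∑_{j ≤ d} C(n, j) k ^ j` of `(1 + k) ^ n`, truncated after degree `d`.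
It bounds the number of patterns cut out by `n` coordinates on a `d`-dimensional set. -/
def truncatedBinomialSum (k d n : ℕ) : ℕ := ∑ j ∈ range (d + 1), n.choose j * k ^ j

theorem one_le_truncatedBinomialSum (k d n : ℕ) : 1 ≤ truncatedBinomialSum k d n := by
  simp [truncatedBinomialSum, sum_range_succ']

theorem truncatedBinomialSum_mono_right (k d : ℕ) : Monotone (truncatedBinomialSum k d) :=
  fun _ _ hmn ↦ sum_le_sum fun j _ ↦ Nat.mul_le_mul_right _ (Nat.choose_mono j hmn)

theorem truncatedBinomialSum_succ_succ (k d n : ℕ) :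
    truncatedBinomialSum k (d + 1) (n + 1) =
      truncatedBinomialSum k (d + 1) n + k * truncatedBinomialSum k d n := by
  have hpascal (j : ℕ) : (n + 1).choose (j + 1) * k ^ (j + 1) =
      n.choose (j + 1) * k ^ (j + 1) + k * (n.choose j * k ^ j) := by
    rw [Nat.choose_succ_succ]; ring
  rw [truncatedBinomialSum, truncatedBinomialSum, truncatedBinomialSum, sum_range_succ',
    sum_range_succ' _ (d + 1), mul_sum]
  simp only [hpascal, sum_add_distrib, Nat.choose_zero_right]
  ring

theorem sum_Icc_choose_pred (d m : ℕ) :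
    ∑ j ∈ Icc (d + 1) m, (j - 1).choose d = m.choose (d + 1) := by
  cases m with
  | zero => simp
  | succ m => rw [← Nat.sum_Icc_choose, ← image_add_right_Icc, sum_image (by simp)]; simp

theorem truncatedBinomialSum_le_Fbound (d n k : ℕ) :
    truncatedBinomialSum k d n ≤ Fbound d n k := by
  rcases d with _ | d
  · -- Truncated subtraction turns every `C(j - 1, d - 1)` into `1`, so `Fbound 0 n k = n - 1 + 1`.
    simp [truncatedBinomialSum, Fbound]
  rcases n with _ | n
  · simp [truncatedBinomialSum, Fbound, sum_range_succ']
  · rw [truncatedBinomialSum_succ_succ, Fbound, Nat.add_sub_cancel, Nat.add_sub_cancel,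
      sum_Icc_choose_pred, truncatedBinomialSum, truncatedBinomialSum, sum_range_succ]
    apply le_of_eq
    ring

theorem card_realizedPatterns_le {E : Type*} [AddCommGroup E] [Module ℝ E] {n d k : ℕ}
    {A : Fin n → Finset (Set ℝ)} (hcard : ∀ l, #(A l) ≤ k + 1)
    (hconn : ∀ l, ∀ I ∈ A l, I.OrdConnected)
    (hdisj : ∀ l, (A l : Set (Set ℝ)).PairwiseDisjoint id) (f : Fin n → E →ᵃ[ℝ] ℝ) {M : Set E}
    (hM : Convex ℝ M) [FiniteDimensional ℝ (vectorSpan ℝ M)]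
    (hd : Module.finrank ℝ (vectorSpan ℝ M) ≤ d) :
    #(realizedPatterns A (fun l ↦ f l) M) ≤ truncatedBinomialSum k d n := by
  induction n generalizing d M with
  | zero => exact (card_le_one_of_subsingleton _).trans (one_le_truncatedBinomialSum k d 0)
  | succ n ih =>
    have ih_tail {d : ℕ} {N : Set E} (hN : Convex ℝ N) [FiniteDimensional ℝ (vectorSpan ℝ N)]
        (hd : Module.finrank ℝ (vectorSpan ℝ N) ≤ d) :
        #(realizedPatterns (Fin.tail A) (fun l ↦ Fin.tail f l) N) ≤ truncatedBinomialSum k d n :=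
      ih (fun l ↦ hcard l.succ) (fun l ↦ hconn l.succ) (fun l ↦ hdisj l.succ) (Fin.tail f) hN hd
    by_cases hconst : ∀ x ∈ M, ∀ y ∈ M, f 0 x = f 0 y
    · exact (card_realizedPatterns_succ_le_of_constant (hdisj 0) hconst).trans
        ((ih_tail hM hd).trans (truncatedBinomialSum_mono_right k d n.le_succ))
    push Not at hconst
    obtain ⟨x, hx, y, hy, hxy⟩ := hconst
    have hlt (c : ℝ) : vectorSpan ℝ (M ∩ f 0 ⁻¹' {c}) < vectorSpan ℝ M :=
      vectorSpan_inter_preimage_singleton_lt (f 0) hx hy hxy c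
    have hfinrank (c : ℝ) := Submodule.finrank_lt_finrank_of_lt (hlt c)
    obtain ⟨d, rfl⟩ : ∃ d', d = d' + 1 := Nat.exists_eq_add_one.2 ((hfinrank 0).pos.trans_le hd)
    have hslice (c : ℝ) : #(realizedPatterns (Fin.tail A) (fun l ↦ Fin.tail f l)
        (M ∩ f 0 ⁻¹' {c})) ≤ truncatedBinomialSum k d n :=
      have := Submodule.finiteDimensional_of_le (hlt c).le
      ih_tail (hM.inter ((convex_singleton c).affine_preimage (f 0)))
        (Nat.lt_succ_iff.1 ((hfinrank c).trans_le hd))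
    obtain ⟨B, hBcard, hB⟩ := exists_card_realizedPatterns_succ_le_add_sum (E := E) hconn (hdisj 0)
    have hBk : #B ≤ k := hBcard ▸ Nat.sub_le_of_le_add (hcard 0)
    rw [truncatedBinomialSum_succ_succ]
    refine (hB f M hM).trans (add_le_add (ih_tail hM hd) ?_)
    exact (sum_le_card_nsmul _ _ _ fun I _ ↦ hslice (sSup I)).trans (Nat.mul_le_mul_right _ hBk)

theorem card_patterns_le_general {E : Type*} [AddCommGroup E] [Module ℝ E] {n d k : ℕ}
    {A : Fin n → Finset (Set ℝ)} (hcard : ∀ l, #(A l) ≤ k + 1)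
    (hconn : ∀ l, ∀ I ∈ A l, I.OrdConnected)
    (hdisj : ∀ l, (A l : Set (Set ℝ)).PairwiseDisjoint id) (f : Fin n → E →ᵃ[ℝ] ℝ) {M : Set E}
    (hM : Convex ℝ M) [FiniteDimensional ℝ (vectorSpan ℝ M)]
    (hd : Module.finrank ℝ (vectorSpan ℝ M) ≤ d) :
    {I : Fin n → Set ℝ | (∀ l, I l ∈ A l) ∧ ∃ x ∈ M, ∀ l, f l x ∈ I l}.ncard ≤ Fbound d n k := by
  have hcoe : {I : Fin n → Set ℝ | (∀ l, I l ∈ A l) ∧ ∃ x ∈ M, ∀ l, f l x ∈ I l} =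
      realizedPatterns A (fun l ↦ f l) M :=
    Set.ext fun I ↦ mem_realizedPatterns.symm
  rw [hcoe, Set.ncard_coe_finset]
  exact (card_realizedPatterns_le hcard hconn hdisj f hM hd).trans
    (truncatedBinomialSum_le_Fbound d n k)

theorem IsPWLWith.pairwiseDisjoint {φ : ℝ → ℝ} {A : Finset (Set ℝ)} (hφ : IsPWLWith φ A) :
    (A : Set (Set ℝ)).PairwiseDisjoint id :=
  fun I hI J hJ hIJ ↦ Set.disjoint_iff_inter_eq_empty.2 (hφ.disjoint I hI J hJ hIJ)

/-- If `M ⊆ ℝ^n` is a `d`-dimensional affine subspace and `φ` is a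
continuous PWL function with `k+1` linear pieces, then the number of activation patterns
`(I⁽¹⁾,…,I⁽ⁿ⁾) ∈ A(φ)ⁿ` realized by some point of `M` is at most `F(d,n,k)`. -/
theorem card_patterns_le {n d k : ℕ} (hk : 1 ≤ k)
    (φ : ℝ → ℝ) (Aφ : Finset (Set ℝ)) (hφ : IsPWLWith φ Aφ) (hcard : Aφ.card = k + 1)
    (M : Set (EuclideanSpace ℝ (Fin n))) (hM : IsAffineOfDim n d M) :
    {I : Fin n → Set ℝ | (∀ l, I l ∈ Aφ) ∧ ∃ x ∈ M, ∀ l, x l ∈ I l}.ncard ≤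
      Fbound d n k := by
  obtain ⟨B, rfl, -, hd⟩ := hM
  exact card_patterns_le_general (fun _ ↦ hcard.le) (fun _ ↦ hφ.ordConn)
    (fun _ ↦ hφ.pairwiseDisjoint) (fun l ↦ (EuclideanSpace.projₗ l).toAffineMap) B.convex
    (B.direction_eq_vectorSpan ▸ hd.le)

end
end
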